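/- arXiv:2201.12744 — 3 statements merged into one kernel-verified Lean document; each statement's English description precedes it below -/
import Mathlib

section
/- Let u be a bounded upper semicontinuous function on Ω_T which is a viscosity subsolution of F(Hw) = e^{∂_t w + G(t,z,w)} g(z) in Ω_T, and let A > osc_{Ω_T} u. Then for every sufficiently large k, the sup-convolution u^k is a viscosity subsolution of F(Hw) = e^{∂_t w + G_k(t,z,w)} g(z) in (A/k, T−A/k) × Ω, where G_k(t,z,r) = inf_{|s| ≤ A/k} G(t+s, z, r). -/
open Filter Topology Set

noncomputable section

/-- The `l`-th elementary symmetric polynomial of `x ∈ ℝⁿ`. -/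
def esym (n l : ℕ) (x : Fin n → ℝ) : ℝ :=
  ∑ s ∈ Finset.powersetCard l (Finset.univ : Finset (Fin n)), ∏ i ∈ s, x i

/-- The cone `Γ_k = {x ∈ ℝⁿ : σ_l(x) > 0 for all 1 ≤ l ≤ k}`. -/
def GammaK (n k : ℕ) : Set (Fin n → ℝ) :=
  {x | ∀ l, 1 ≤ l → l ≤ k → 0 < esym n l x}

/-- `Γ ⊊ ℝⁿ` is an open, convex, symmetric cone with vertex `0` and `Γₙ ⊆ Γ ⊆ Γ₁`. -/
def IsGammaCone (n : ℕ) (Γ : Set (Fin n → ℝ)) : Prop :=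
  IsOpen Γ ∧ Convex ℝ Γ ∧ (∀ x ∈ Γ, ∀ t : ℝ, 0 < t → t • x ∈ Γ) ∧
    (∀ σ : Equiv.Perm (Fin n), ∀ x ∈ Γ, x ∘ σ ∈ Γ) ∧
    Γ ≠ Set.univ ∧ GammaK n n ⊆ Γ ∧ Γ ⊆ GammaK n 1

/-- `f : cl(Γ) → [0,∞)` symmetric, concave, strictly increasing in each variable,
vanishing on `∂Γ`. -/
def IsHessianDensity (n : ℕ) (Γ : Set (Fin n → ℝ)) (f : (Fin n → ℝ) → ℝ) : Prop :=
  (∀ x ∈ closure Γ, 0 ≤ f x) ∧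
    (∀ σ : Equiv.Perm (Fin n), ∀ x ∈ closure Γ, f (x ∘ σ) = f x) ∧
    ConcaveOn ℝ (closure Γ) f ∧
    (∀ x ∈ closure Γ, ∀ y ∈ closure Γ, (∀ i, x i ≤ y i) → x ≠ y → f x < f y) ∧
    (∀ x ∈ frontier Γ, f x = 0)

/-- The complex Hessian `(∂²u/∂z_j∂z̄_k)_{j,k}` of a real-valued function on `ℂⁿ`,
computed from the real second derivative. -/
def complexHessian {n : ℕ} (u : (Fin n → ℂ) → ℝ) (z : Fin n → ℂ) :
    Matrix (Fin n) (Fin n) ℂ := fun j k =>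
  (((iteratedFDeriv ℝ 2 u z ![Pi.single j 1, Pi.single k 1] +
        iteratedFDeriv ℝ 2 u z ![Pi.single j Complex.I, Pi.single k Complex.I]) / 4 : ℝ) : ℂ) +
    Complex.I *
      (((iteratedFDeriv ℝ 2 u z ![Pi.single j 1, Pi.single k Complex.I] -
          iteratedFDeriv ℝ 2 u z ![Pi.single j Complex.I, Pi.single k 1]) / 4 : ℝ) : ℂ)

open Classical in
/-- `F(H) = f(λ(H))` if `λ(H) ∈ cl(Γ)` and `F(H) = −∞` otherwise. -/
def Fop {n : ℕ} (f : (Fin n → ℝ) → ℝ) (Γ : Set (Fin n → ℝ))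
    (A : Matrix (Fin n) (Fin n) ℂ) : EReal :=
  if h : A.IsHermitian then
    if h.eigenvalues ∈ closure Γ then ((f h.eigenvalues : ℝ) : EReal) else ⊥
  else ⊥

/-- An upper test function (C¹ in t, C² in z near `p₀`) for `u` at `p₀`. -/
def IsUpperTestAt {n : ℕ} (u q : ℝ × (Fin n → ℂ) → ℝ) (p₀ : ℝ × (Fin n → ℂ)) : Prop :=
  q p₀ = u p₀ ∧ (∀ᶠ p in 𝓝 p₀, u p ≤ q p) ∧
    ∀ᶠ p in 𝓝 p₀, DifferentiableAt ℝ (fun t => q (t, p.2)) p.1 ∧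
      ContDiffAt ℝ 2 (fun z => q (p.1, z)) p.2

/-- A lower test function (C¹ in t, C² in z near `p₀`) for `v` at `p₀`. -/
def IsLowerTestAt {n : ℕ} (v q : ℝ × (Fin n → ℂ) → ℝ) (p₀ : ℝ × (Fin n → ℂ)) : Prop :=
  q p₀ = v p₀ ∧ (∀ᶠ p in 𝓝 p₀, q p ≤ v p) ∧
    ∀ᶠ p in 𝓝 p₀, DifferentiableAt ℝ (fun t => q (t, p.2)) p.1 ∧
      ContDiffAt ℝ 2 (fun z => q (p.1, z)) p.2

/-- Viscosity subsolution of `F(Hw) = e^{∂ₜw + G(t,z,w)} g(z)` on `D`. -/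
def ParSubsolOn {n : ℕ} (f : (Fin n → ℝ) → ℝ) (Γ : Set (Fin n → ℝ))
    (G : ℝ → (Fin n → ℂ) → ℝ → ℝ) (g : (Fin n → ℂ) → ℝ)
    (D : Set (ℝ × (Fin n → ℂ))) (u : ℝ × (Fin n → ℂ) → ℝ) : Prop :=
  UpperSemicontinuousOn u D ∧
    ∀ p₀ ∈ D, ∀ q, IsUpperTestAt u q p₀ →
      ((Real.exp (deriv (fun t => q (t, p₀.2)) p₀.1 + G p₀.1 p₀.2 (q p₀)) * g p₀.2 : ℝ) : EReal)
        ≤ Fop f Γ (complexHessian (fun z => q (p₀.1, z)) p₀.2)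

/-- Viscosity supersolution of `F(Hw) = e^{∂ₜw + G(t,z,w)} g(z)` on `D`. -/
def ParSupersolOn {n : ℕ} (f : (Fin n → ℝ) → ℝ) (Γ : Set (Fin n → ℝ))
    (G : ℝ → (Fin n → ℂ) → ℝ → ℝ) (g : (Fin n → ℂ) → ℝ)
    (D : Set (ℝ × (Fin n → ℂ))) (v : ℝ × (Fin n → ℂ) → ℝ) : Prop :=
  LowerSemicontinuousOn v D ∧
    ∀ p₀ ∈ D, ∀ q, IsLowerTestAt v q p₀ →
      Fop f Γ (complexHessian (fun z => q (p₀.1, z)) p₀.2)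
        ≤ ((Real.exp (deriv (fun t => q (t, p₀.2)) p₀.1 + G p₀.1 p₀.2 (q p₀)) * g p₀.2 : ℝ) : EReal)

/-- Upper semicontinuous envelope relative to `D`. -/
def uscEnvOn {X : Type*} [TopologicalSpace X] (D : Set X) (w : X → ℝ) (x : X) : ℝ :=
  Filter.limsup w (𝓝[D] x)

/-- Lower semicontinuous envelope relative to `D`. -/
def lscEnvOn {X : Type*} [TopologicalSpace X] (D : Set X) (w : X → ℝ) (x : X) : ℝ :=
  Filter.liminf w (𝓝[D] x)

/-- Sup-convolution in time `u^k`. -/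
def supConv {n : ℕ} (u : ℝ × (Fin n → ℂ) → ℝ) (A k : ℝ) (p : ℝ × (Fin n → ℂ)) : ℝ :=
  sSup ((fun s : ℝ => u (p.1 + s, p.2) - k * |s|) '' Set.Icc (-(A / k)) (A / k))

/-- Inf-convolution in time `u_k`. -/
def infConv {n : ℕ} (u : ℝ × (Fin n → ℂ) → ℝ) (A k : ℝ) (p : ℝ × (Fin n → ℂ)) : ℝ :=
  sInf ((fun s : ℝ => u (p.1 + s, p.2) + k * |s|) '' Set.Icc (-(A / k)) (A / k))

/-- Parabolic superjet `𝒫^{2,+} u (p₀)`; `p` and `Q` are the ℝ-linear first- and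
second-order data on `ℂⁿ ≅ ℝ^{2n}`. -/
def InParSuperjet {n : ℕ} (u : ℝ × (Fin n → ℂ) → ℝ) (p₀ : ℝ × (Fin n → ℂ)) (τ : ℝ)
    (p : (Fin n → ℂ) →ₗ[ℝ] ℝ) (Q : (Fin n → ℂ) →ₗ[ℝ] (Fin n → ℂ) →ₗ[ℝ] ℝ) : Prop :=
  ∀ ε > 0, ∀ᶠ x in 𝓝 p₀,
    u x ≤ u p₀ + τ * (x.1 - p₀.1) + p (x.2 - p₀.2) +
      (1 / 2) * Q (x.2 - p₀.2) (x.2 - p₀.2) + ε * (|x.1 - p₀.1| + ‖x.2 - p₀.2‖ ^ 2)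

/-- Parabolic subjet `𝒫^{2,−} v (p₀) = −𝒫^{2,+}(−v)(p₀)`. -/
def InParSubjet {n : ℕ} (v : ℝ × (Fin n → ℂ) → ℝ) (p₀ : ℝ × (Fin n → ℂ)) (τ : ℝ)
    (p : (Fin n → ℂ) →ₗ[ℝ] ℝ) (Q : (Fin n → ℂ) →ₗ[ℝ] (Fin n → ℂ) →ₗ[ℝ] ℝ) : Prop :=
  InParSuperjet (fun x => -(v x)) p₀ (-τ) (-p) (-Q)

/-- An upper test function (C² near `z₀`) for `ψ` at `z₀` (elliptic case). -/
def IsUpperTestAtE {n : ℕ} (ψ q : (Fin n → ℂ) → ℝ) (z₀ : Fin n → ℂ) : Prop :=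
  q z₀ = ψ z₀ ∧ (∀ᶠ z in 𝓝 z₀, ψ z ≤ q z) ∧ ContDiffAt ℝ 2 q z₀

/-- A lower test function (C² near `z₀`) for `ψ` at `z₀` (elliptic case). -/
def IsLowerTestAtE {n : ℕ} (ψ q : (Fin n → ℂ) → ℝ) (z₀ : Fin n → ℂ) : Prop :=
  q z₀ = ψ z₀ ∧ (∀ᶠ z in 𝓝 z₀, q z ≤ ψ z) ∧ ContDiffAt ℝ 2 q z₀

/-- `ψ` is `Γ`-subharmonic on `D` in the viscosity sense: `F(Hψ) ≥ 0`. -/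
def GammaSubharmonicOn {n : ℕ} (Γ : Set (Fin n → ℝ)) (D : Set (Fin n → ℂ))
    (ψ : (Fin n → ℂ) → ℝ) : Prop :=
  ∀ z₀ ∈ D, ∀ q, IsUpperTestAtE ψ q z₀ →
    ∃ hh : (complexHessian q z₀).IsHermitian, hh.eigenvalues ∈ closure Γ

/-- Viscosity subsolution of the elliptic equation `e^{K(z,ψ)} − F(Hψ) = 0` on `D`,
where the right-hand side `K z₀ (q z₀)` may depend on the tested value. -/
def EllSubsolOn {n : ℕ} (f : (Fin n → ℝ) → ℝ) (Γ : Set (Fin n → ℝ))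
    (K : (Fin n → ℂ) → ℝ → ℝ) (D : Set (Fin n → ℂ)) (ψ : (Fin n → ℂ) → ℝ) : Prop :=
  UpperSemicontinuousOn ψ D ∧
    ∀ z₀ ∈ D, ∀ q, IsUpperTestAtE ψ q z₀ →
      ((K z₀ (q z₀) : ℝ) : EReal) ≤ Fop f Γ (complexHessian q z₀)

/-- Viscosity subsolution of the time-derivative-free parabolic equation
`e^{H(t,z,w)} h(t,z) − F(Hw) = 0` on `D`. -/
def ParSubsolNoDtOn {n : ℕ} (f : (Fin n → ℝ) → ℝ) (Γ : Set (Fin n → ℝ))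
    (Hf : ℝ → (Fin n → ℂ) → ℝ → ℝ) (h : ℝ × (Fin n → ℂ) → ℝ)
    (D : Set (ℝ × (Fin n → ℂ))) (w : ℝ × (Fin n → ℂ) → ℝ) : Prop :=
  UpperSemicontinuousOn w D ∧
    ∀ p₀ ∈ D, ∀ q, IsUpperTestAt w q p₀ →
      ((Real.exp (Hf p₀.1 p₀.2 (q p₀)) * h p₀ : ℝ) : EReal)
        ≤ Fop f Γ (complexHessian (fun z => q (p₀.1, z)) p₀.2)

/-- Subsolution of the Cauchy–Dirichlet problem. -/
def CDSubsol {n : ℕ} (f : (Fin n → ℝ) → ℝ) (Γ : Set (Fin n → ℝ))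
    (G : ℝ → (Fin n → ℂ) → ℝ → ℝ) (g : (Fin n → ℂ) → ℝ)
    (Ω : Set (Fin n → ℂ)) (T : ℝ) (φ : ℝ → (Fin n → ℂ) → ℝ)
    (u₀ : (Fin n → ℂ) → ℝ) (u : ℝ × (Fin n → ℂ) → ℝ) : Prop :=
  UpperSemicontinuousOn u (Set.Ico 0 T ×ˢ closure Ω) ∧
    ParSubsolOn f Γ G g (Set.Ioo 0 T ×ˢ Ω) u ∧
    (∀ t ∈ Set.Ico (0 : ℝ) T, ∀ z ∈ frontier Ω, u (t, z) ≤ φ t z) ∧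
    (∀ z ∈ closure Ω, u (0, z) ≤ u₀ z)

/-- Supersolution of the Cauchy–Dirichlet problem. -/
def CDSupersol {n : ℕ} (f : (Fin n → ℝ) → ℝ) (Γ : Set (Fin n → ℝ))
    (G : ℝ → (Fin n → ℂ) → ℝ → ℝ) (g : (Fin n → ℂ) → ℝ)
    (Ω : Set (Fin n → ℂ)) (T : ℝ) (φ : ℝ → (Fin n → ℂ) → ℝ)
    (u₀ : (Fin n → ℂ) → ℝ) (v : ℝ × (Fin n → ℂ) → ℝ) : Prop :=
  LowerSemicontinuousOn v (Set.Ico 0 T ×ˢ closure Ω) ∧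
    ParSupersolOn f Γ G g (Set.Ioo 0 T ×ˢ Ω) v ∧
    (∀ t ∈ Set.Ico (0 : ℝ) T, ∀ z ∈ frontier Ω, φ t z ≤ v (t, z)) ∧
    (∀ z ∈ closure Ω, u₀ z ≤ v (0, z))

/-- `ε`-subbarrier for the Cauchy–Dirichlet problem. -/
def SubBarrier {n : ℕ} (f : (Fin n → ℝ) → ℝ) (Γ : Set (Fin n → ℝ))
    (G : ℝ → (Fin n → ℂ) → ℝ → ℝ) (g : (Fin n → ℂ) → ℝ)
    (Ω : Set (Fin n → ℂ)) (T : ℝ) (φ : ℝ → (Fin n → ℂ) → ℝ)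
    (u₀ : (Fin n → ℂ) → ℝ) (ε : ℝ) (u : ℝ × (Fin n → ℂ) → ℝ) : Prop :=
  UpperSemicontinuousOn u (Set.Ico 0 T ×ˢ closure Ω) ∧
    ParSubsolOn f Γ G g (Set.Ioo 0 T ×ˢ Ω) u ∧
    (∀ z ∈ closure Ω,
      u₀ z - ε ≤ lscEnvOn (Set.Ico 0 T ×ˢ closure Ω) u (0, z) ∧
        lscEnvOn (Set.Ico 0 T ×ˢ closure Ω) u (0, z) ≤ u (0, z) ∧ u (0, z) ≤ u₀ z) ∧
    (∀ t ∈ Set.Ico (0 : ℝ) T, ∀ z ∈ frontier Ω,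
      φ t z - ε ≤ lscEnvOn (Set.Ico 0 T ×ˢ closure Ω) u (t, z) ∧
        lscEnvOn (Set.Ico 0 T ×ˢ closure Ω) u (t, z) ≤ u (t, z) ∧ u (t, z) ≤ φ t z)

/-- `ε`-superbarrier for the Cauchy–Dirichlet problem. -/
def SuperBarrier {n : ℕ} (f : (Fin n → ℝ) → ℝ) (Γ : Set (Fin n → ℝ))
    (G : ℝ → (Fin n → ℂ) → ℝ → ℝ) (g : (Fin n → ℂ) → ℝ)
    (Ω : Set (Fin n → ℂ)) (T : ℝ) (φ : ℝ → (Fin n → ℂ) → ℝ)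
    (u₀ : (Fin n → ℂ) → ℝ) (ε : ℝ) (v : ℝ × (Fin n → ℂ) → ℝ) : Prop :=
  LowerSemicontinuousOn v (Set.Ico 0 T ×ˢ closure Ω) ∧
    ParSupersolOn f Γ G g (Set.Ioo 0 T ×ˢ Ω) v ∧
    (∀ z ∈ closure Ω,
      uscEnvOn (Set.Ico 0 T ×ˢ closure Ω) v (0, z) ≤ u₀ z + ε ∧
        v (0, z) ≤ uscEnvOn (Set.Ico 0 T ×ˢ closure Ω) v (0, z) ∧ u₀ z ≤ v (0, z)) ∧
    (∀ t ∈ Set.Ico (0 : ℝ) T, ∀ z ∈ frontier Ω,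
      uscEnvOn (Set.Ico 0 T ×ˢ closure Ω) v (t, z) ≤ φ t z + ε ∧
        v (t, z) ≤ uscEnvOn (Set.Ico 0 T ×ˢ closure Ω) v (t, z) ∧ φ t z ≤ v (t, z))

/-- Lipschitz in the time variable, uniformly on `[0,T) × cl(Ω)`. -/
def LipschitzInT {n : ℕ} (Ω : Set (Fin n → ℂ)) (T : ℝ) (u : ℝ × (Fin n → ℂ) → ℝ) : Prop :=
  ∃ L : ℝ, ∀ t₁ ∈ Set.Ico (0 : ℝ) T, ∀ t₂ ∈ Set.Ico (0 : ℝ) T, ∀ z ∈ closure Ω,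
    |u (t₁, z) - u (t₂, z)| ≤ L * |t₁ - t₂|

/-- The pair `(u₀, g)` is admissible. -/
def Admissible {n : ℕ} (f : (Fin n → ℝ) → ℝ) (Γ : Set (Fin n → ℝ))
    (Ω : Set (Fin n → ℂ)) (g u₀ : (Fin n → ℂ) → ℝ) : Prop :=
  ∀ ε > 0, ∃ uε : (Fin n → ℂ) → ℝ, ∃ Cε > 0,
    ContinuousOn uε (closure Ω) ∧ (∀ z ∈ closure Ω, u₀ z ≤ uε z ∧ uε z ≤ u₀ z + ε) ∧
      ∀ z₀ ∈ Ω, ∀ q, IsLowerTestAtE uε q z₀ →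
        Fop f Γ (complexHessian q z₀) ≤ ((Real.exp Cε * g z₀ : ℝ) : EReal)

/-- `Ω` is a strictly `Γ`-pseudoconvex domain. -/
def StrictlyGammaPseudoconvex {n : ℕ} (Γ : Set (Fin n → ℝ)) (Ω : Set (Fin n → ℂ)) : Prop :=
  ∃ ρ : (Fin n → ℂ) → ℝ, ContDiff ℝ (⊤ : ℕ∞) ρ ∧
    (∀ z ∈ closure Ω, ∃ hh : (complexHessian ρ z).IsHermitian, hh.eigenvalues ∈ Γ) ∧
    (∀ z ∈ frontier Ω, ρ z = 0) ∧ (∀ z ∈ Ω, ρ z < 0) ∧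
    ∀ z ∈ frontier Ω, fderiv ℝ ρ z ≠ 0

end

/-- for k large, the sup-convolution u^k is a subsolution with G replaced by G_k. -/
theorem stmt9
    {n : ℕ} (hn : 1 ≤ n) (Γ : Set (Fin n → ℝ)) (f : (Fin n → ℝ) → ℝ)
    (hΓ : IsGammaCone n Γ) (hf : IsHessianDensity n Γ f)
    (Ω : Set (Fin n → ℂ)) (hΩo : IsOpen Ω) (hΩb : Bornology.IsBounded Ω)
    (hΩc : IsConnected Ω) (T : ℝ) (hT : 0 < T)
    (G : ℝ → (Fin n → ℂ) → ℝ → ℝ)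
    (hGc : ContinuousOn (fun p : ℝ × (Fin n → ℂ) × ℝ => G p.1 p.2.1 p.2.2)
      (Set.Icc 0 T ×ˢ closure Ω ×ˢ Set.univ))
    (hGm : ∀ t z, Monotone (fun r => G t z r))
    (g : (Fin n → ℂ) → ℝ) (hgc : ContinuousOn g Ω)
    (hg0 : ∀ z ∈ Ω, 0 ≤ g z) (hgb : ∃ C, ∀ z ∈ Ω, g z ≤ C)
    (u : ℝ × (Fin n → ℂ) → ℝ)
    (hbd : ∃ C, ∀ p ∈ Set.Ioo 0 T ×ˢ Ω, |u p| ≤ C)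
    (hsub : ParSubsolOn f Γ G g (Set.Ioo 0 T ×ˢ Ω) u)
    (A : ℝ)
    (hA : sSup (u '' (Set.Ioo 0 T ×ˢ Ω)) - sInf (u '' (Set.Ioo 0 T ×ˢ Ω)) < A) :
    ∃ k₀ : ℝ, ∀ k : ℝ, k₀ ≤ k →
      ParSubsolOn f Γ
        (fun t z r => sInf ((fun s : ℝ => G (t + s) z r) '' Set.Icc (-(A / k)) (A / k))) g
        (Set.Ioo (A / k) (T - A / k) ×ˢ Ω) (supConv u A k) := by
  obtain ⟨C, hC⟩ := hbd
  obtain ⟨husc, htest⟩ := hsub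
  have hDo : IsOpen (Set.Ioo 0 T ×ˢ Ω) := isOpen_Ioo.prod hΩo
  -- A is positive
  have hApos : 0 < A := by
    obtain ⟨z, hz⟩ := hΩc.nonempty
    have hmem : ((T / 2, z) : ℝ × (Fin n → ℂ)) ∈ Set.Ioo 0 T ×ˢ Ω :=
      ⟨⟨by simp only []; linarith, by simp only []; linarith⟩, hz⟩
    have h1 : u (T / 2, z) ≤ sSup (u '' (Set.Ioo 0 T ×ˢ Ω)) :=
      le_csSup ⟨C, by rintro _ ⟨p, hp, rfl⟩; exact (abs_le.1 (hC p hp)).2⟩ ⟨_, hmem, rfl⟩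
    have h2 : sInf (u '' (Set.Ioo 0 T ×ˢ Ω)) ≤ u (T / 2, z) :=
      csInf_le ⟨-C, by rintro _ ⟨p, hp, rfl⟩; exact (abs_le.1 (hC p hp)).1⟩ ⟨_, hmem, rfl⟩
    linarith
  refine ⟨1, fun k hk => ?_⟩
  have hkpos : 0 < k := by linarith
  have hAk : 0 < A / k := div_pos hApos hkpos
  set a := A / k with ha
  have hDk : IsOpen (Set.Ioo a (T - a) ×ˢ Ω) := isOpen_Ioo.prod hΩo
  have hne : (Set.Icc (-a) a).Nonempty := ⟨0, by constructor <;> linarith⟩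
  have hshift : ∀ p ∈ Set.Ioo a (T - a) ×ˢ Ω, ∀ s ∈ Set.Icc (-a) a,
      ((p.1 + s, p.2) : ℝ × (Fin n → ℂ)) ∈ Set.Ioo 0 T ×ˢ Ω := by
    rintro p ⟨⟨h1, h2⟩, h3⟩ s ⟨h4, h5⟩
    exact ⟨⟨by simp only []; linarith, by simp only []; linarith⟩, h3⟩
  have hbdd : ∀ p ∈ Set.Ioo a (T - a) ×ˢ Ω,
      BddAbove ((fun s : ℝ => u (p.1 + s, p.2) - k * |s|) '' Set.Icc (-a) a) := by
    intro p hp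
    refine ⟨C, ?_⟩
    rintro _ ⟨s, hs, rfl⟩
    have h1 := (abs_le.1 (hC _ (hshift p hp s hs))).2
    have h2 : 0 ≤ k * |s| := by positivity
    simp only []
    linarith
  -- joint upper semicontinuity of the function whose supremum is taken
  have hjoint : ∀ p ∈ Set.Ioo a (T - a) ×ˢ Ω, ∀ s ∈ Set.Icc (-a) a,
      UpperSemicontinuousAt (fun y : (ℝ × (Fin n → ℂ)) × ℝ =>
        u (y.1.1 + y.2, y.1.2) - k * |y.2|) (p, s) := by
    intro p hp s hs
    have hm := hshift p hp s hs
    have h1 : ∀ c, u (p.1 + s, p.2) < c →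
        ∀ᶠ x in 𝓝 ((p.1 + s, p.2) : ℝ × (Fin n → ℂ)), u x < c := by
      intro c hc
      have := husc _ hm c hc
      rwa [hDo.nhdsWithin_eq hm] at this
    intro c hc
    have hc' : u (p.1 + s, p.2) - k * |s| < c := hc
    obtain ⟨e, he, hce⟩ : ∃ e > 0, u (p.1 + s, p.2) - k * |s| + 2 * e < c :=
      ⟨(c - (u (p.1 + s, p.2) - k * |s|)) / 3, by linarith, by linarith⟩
    have hφ : Continuous (fun y : (ℝ × (Fin n → ℂ)) × ℝ =>
        ((y.1.1 + y.2, y.1.2) : ℝ × (Fin n → ℂ))) := by fun_prop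
    have hψ : Continuous (fun y : (ℝ × (Fin n → ℂ)) × ℝ => k * |y.2|) := by fun_prop
    have e1 := (hφ.tendsto (p, s)).eventually (h1 (u (p.1 + s, p.2) + e) (by linarith))
    have e2 := (hψ.tendsto (p, s)).eventually (lt_mem_nhds (a := k * |s| - e) (by simp [he]))
    filter_upwards [e1, e2] with y hy1 hy2
    linarith
  refine ⟨?_, ?_⟩
  · intro p hp c hc
    obtain ⟨d, hd1, hd2⟩ := exists_between hc
    rw [hDk.nhdsWithin_eq hp]
    have key : ∀ᶠ x in 𝓝 p, ∀ s ∈ Set.Icc (-a) a, u (x.1 + s, x.2) - k * |s| < d := by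
      refine isCompact_Icc.eventually_forall_of_forall_eventually ?_
      intro s hs
      refine hjoint p hp s hs d ?_
      exact (le_csSup (hbdd p hp) ⟨s, hs, rfl⟩).trans_lt hd1
    filter_upwards [key] with x hx
    refine lt_of_le_of_lt (csSup_le (hne.image _) ?_) hd2
    rintro _ ⟨s, hs, rfl⟩
    exact (hx s hs).le
  · intro p hp q hq
    obtain ⟨hq1, hq2, hq3⟩ := hq
    -- the supremum is attained
    have huscs : UpperSemicontinuousOn (fun s : ℝ => u (p.1 + s, p.2) - k * |s|)
        (Set.Icc (-a) a) := by
      intro s hs c hc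
      have h := hjoint p hp s hs c hc
      have hcont : Continuous (fun s : ℝ => (p, s)) := by fun_prop
      exact ((hcont.tendsto s).eventually h).filter_mono nhdsWithin_le_nhds
    obtain ⟨s₀, hs₀, hmax⟩ := huscs.exists_isMaxOn hne isCompact_Icc
    have hval : supConv u A k p = u (p.1 + s₀, p.2) - k * |s₀| := by
      refine le_antisymm (csSup_le (hne.image _) ?_) (le_csSup (hbdd p hp) ⟨s₀, hs₀, rfl⟩)
      rintro _ ⟨s, hs, rfl⟩
      exact hmax hs
    have hm := hshift p hp s₀ hs₀
    set Q : ℝ × (Fin n → ℂ) → ℝ := fun y => q (y.1 - s₀, y.2) + k * |s₀| with hQ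
    have hφ : Continuous (fun y : ℝ × (Fin n → ℂ) =>
        ((y.1 - s₀, y.2) : ℝ × (Fin n → ℂ))) := by fun_prop
    have htend : Tendsto (fun y : ℝ × (Fin n → ℂ) => ((y.1 - s₀, y.2) : ℝ × (Fin n → ℂ)))
        (𝓝 (p.1 + s₀, p.2)) (𝓝 p) := by
      have := hφ.tendsto (p.1 + s₀, p.2)
      simpa using this
    have hQtest : IsUpperTestAt u Q (p.1 + s₀, p.2) := by
      refine ⟨?_, ?_, ?_⟩
      · have : q p = u (p.1 + s₀, p.2) - k * |s₀| := hq1.trans hval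
        simp [hQ, this]
      · filter_upwards [htend.eventually hq2, htend.eventually (hDk.mem_nhds hp)] with y hy hyD
        have h1 : u ((y.1 - s₀) + s₀, y.2) - k * |s₀| ≤ supConv u A k (y.1 - s₀, y.2) :=
          le_csSup (hbdd _ hyD) ⟨s₀, hs₀, rfl⟩
        rw [sub_add_cancel] at h1
        simp only [hQ]
        have h2 : u (y.1, y.2) = u y := rfl
        linarith
      · filter_upwards [htend.eventually hq3] with y hy
        refine ⟨?_, ?_⟩
        · have h1 : DifferentiableAt ℝ (fun t => t - s₀) y.1 := by fun_prop
          exact (DifferentiableAt.comp y.1 (g := fun t => q (t, y.2)) hy.1 h1).add_const _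
        · exact hy.2.add contDiffAt_const
    have hmain := htest _ hm Q hQtest
    have hder : deriv (fun t => Q (t, p.2)) (p.1 + s₀) = deriv (fun t => q (t, p.2)) p.1 := by
      simp only [hQ]
      rw [deriv_add_const, deriv_comp_sub_const (f := fun t => q (t, p.2)), add_sub_cancel_right]
    have hfun : (fun z => Q (p.1 + s₀, z)) = fun z => q (p.1, z) + k * |s₀| := by
      funext z; simp [hQ]
    have hhess : complexHessian (fun z => Q (p.1 + s₀, z)) p.2
        = complexHessian (fun z => q (p.1, z)) p.2 := by
      have hit : iteratedFDeriv ℝ 2 (fun z => q (p.1, z) + k * |s₀|) p.2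
          = iteratedFDeriv ℝ 2 (fun z => q (p.1, z)) p.2 := by
        have hd : fderiv ℝ (fun z => q (p.1, z) + k * |s₀|) = fderiv ℝ (fun z => q (p.1, z)) := by
          funext z; rw [fderiv_add_const]
        ext m
        rw [iteratedFDeriv_two_apply, iteratedFDeriv_two_apply, hd]
      rw [hfun]
      unfold complexHessian
      rw [hit]
    rw [hder, hhess] at hmain
    refine le_trans ?_ hmain
    rw [EReal.coe_le_coe_iff]
    refine mul_le_mul_of_nonneg_right (Real.exp_le_exp.2 ?_) (hg0 _ hp.2)
    refine add_le_add le_rfl ?_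
    have hQp : Q (p.1 + s₀, p.2) = q p + k * |s₀| := by simp [hQ]
    refine le_trans (b := G (p.1 + s₀) p.2 (q p)) ?_ ?_
    · refine csInf_le ?_ ⟨s₀, hs₀, rfl⟩
      refine (isCompact_Icc.image_of_continuousOn ?_).bddBelow
      have hc : Continuous (fun s : ℝ => ((p.1 + s, p.2, q p) : ℝ × (Fin n → ℂ) × ℝ)) := by
        fun_prop
      refine hGc.comp hc.continuousOn ?_
      intro s hs
      have := hshift p hp s hs
      exact ⟨⟨this.1.1.le, this.1.2.le⟩, subset_closure this.2, mem_univ _⟩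
    · rw [hQp]
      exact hGm _ _ (by have : 0 ≤ k * |s₀| := by positivity
                        linarith)
end

section
/- Let u be a bounded lower semicontinuous function on Ω_T which is a viscosity supersolution of F(Hw) = e^{∂_t w + G(t,z,w)} g(z) in Ω_T, and let A > osc_{Ω_T} u. Then for every sufficiently large k, the inf-convolution u_k is a viscosity supersolution of F(Hw) = e^{∂_t w + G^k(t,z,w)} g(z) in (A/k, T−A/k) × Ω, where G^k(t,z,r) = sup_{|s| ≤ A/k} G(t+s, z, r). -/
open Filter Topology Set

/-- for k large, the inf-convolution u_k is a supersolution with G replaced by G^k. -/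
theorem stmt11
    {n : ℕ} (hn : 1 ≤ n) (Γ : Set (Fin n → ℝ)) (f : (Fin n → ℝ) → ℝ)
    (hΓ : IsGammaCone n Γ) (hf : IsHessianDensity n Γ f)
    (Ω : Set (Fin n → ℂ)) (hΩo : IsOpen Ω) (hΩb : Bornology.IsBounded Ω)
    (hΩc : IsConnected Ω) (T : ℝ) (hT : 0 < T)
    (G : ℝ → (Fin n → ℂ) → ℝ → ℝ)
    (hGc : ContinuousOn (fun p : ℝ × (Fin n → ℂ) × ℝ => G p.1 p.2.1 p.2.2)
      (Set.Icc 0 T ×ˢ closure Ω ×ˢ Set.univ))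
    (hGm : ∀ t z, Monotone (fun r => G t z r))
    (g : (Fin n → ℂ) → ℝ) (hgc : ContinuousOn g Ω)
    (hg0 : ∀ z ∈ Ω, 0 ≤ g z) (hgb : ∃ C, ∀ z ∈ Ω, g z ≤ C)
    (u : ℝ × (Fin n → ℂ) → ℝ)
    (hbd : ∃ C, ∀ p ∈ Set.Ioo 0 T ×ˢ Ω, |u p| ≤ C)
    (hsup : ParSupersolOn f Γ G g (Set.Ioo 0 T ×ˢ Ω) u)
    (A : ℝ)
    (hA : sSup (u '' (Set.Ioo 0 T ×ˢ Ω)) - sInf (u '' (Set.Ioo 0 T ×ˢ Ω)) < A) :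
    ∃ k₀ : ℝ, ∀ k : ℝ, k₀ ≤ k →
      ParSupersolOn f Γ
        (fun t z r => sSup ((fun s : ℝ => G (t + s) z r) '' Set.Icc (-(A / k)) (A / k))) g
        (Set.Ioo (A / k) (T - A / k) ×ˢ Ω) (infConv u A k) := by
  classical
  obtain ⟨C, hC⟩ := hbd
  obtain ⟨hlsc, hvis⟩ := hsup
  -- positivity of `A`
  have hApos : 0 < A := by
    obtain ⟨z, hz⟩ := hΩc.nonempty
    have hne : (u '' (Set.Ioo 0 T ×ˢ Ω)).Nonempty :=
      ⟨_, (T / 2, z), ⟨⟨by simp only; linarith, by simp only; linarith⟩, hz⟩, rfl⟩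
    have hb : BddBelow (u '' (Set.Ioo 0 T ×ˢ Ω)) := by
      refine ⟨-C, ?_⟩
      rintro _ ⟨p, hp, rfl⟩
      exact (abs_le.1 (hC p hp)).1
    have ha : BddAbove (u '' (Set.Ioo 0 T ×ˢ Ω)) := by
      refine ⟨C, ?_⟩
      rintro _ ⟨p, hp, rfl⟩
      exact (abs_le.1 (hC p hp)).2
    have := (csInf_le hb hne.some_mem).trans (le_csSup ha hne.some_mem)
    linarith
  have hDo : IsOpen (Set.Ioo 0 T ×ˢ Ω) := isOpen_Ioo.prod hΩo
  refine ⟨1, fun k hk => ?_⟩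
  have hkpos : 0 < k := by linarith
  have hAk : 0 < A / k := div_pos hApos hkpos
  have hKne : (Set.Icc (-(A / k)) (A / k)).Nonempty := ⟨0, by constructor <;> linarith⟩
  -- shifted points remain in the domain
  have hmem : ∀ p ∈ Set.Ioo (A / k) (T - A / k) ×ˢ Ω, ∀ s ∈ Set.Icc (-(A / k)) (A / k),
      (p.1 + s, p.2) ∈ Set.Ioo 0 T ×ˢ Ω := by
    rintro p ⟨⟨h1, h2⟩, h3⟩ s ⟨h4, h5⟩
    exact ⟨⟨by simp only; linarith, by simp only; linarith⟩, h3⟩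
  have hjoint : ∀ p ∈ Set.Ioo (A / k) (T - A / k) ×ˢ Ω, ∀ s ∈ Set.Icc (-(A / k)) (A / k),
      LowerSemicontinuousAt (fun x : (ℝ × (Fin n → ℂ)) × ℝ =>
        u (x.1.1 + x.2, x.1.2) + k * |x.2|) (p, s) := by
    intro p hp s hs
    have hu : LowerSemicontinuousAt u (p.1 + s, p.2) := by
      intro y hy
      have h := hlsc _ (hmem p hp s hs) y hy
      rwa [hDo.nhdsWithin_eq (hmem p hp s hs)] at h
    have hc : Continuous (fun x : (ℝ × (Fin n → ℂ)) × ℝ => (x.1.1 + x.2, x.1.2)) := by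
      fun_prop
    have h1 : LowerSemicontinuousAt (fun x : (ℝ × (Fin n → ℂ)) × ℝ =>
        u (x.1.1 + x.2, x.1.2)) (p, s) := by
      intro y hy
      exact (hc.tendsto (p, s)).eventually (hu y hy)
    have h2 : Continuous (fun x : (ℝ × (Fin n → ℂ)) × ℝ => k * |x.2|) := by fun_prop
    exact h1.add h2.continuousAt.lowerSemicontinuousAt
  have hbelow : ∀ p ∈ Set.Ioo (A / k) (T - A / k) ×ˢ Ω,
      BddBelow ((fun s : ℝ => u (p.1 + s, p.2) + k * |s|) '' Set.Icc (-(A / k)) (A / k)) := by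
    intro p hp
    refine ⟨-C, ?_⟩
    rintro _ ⟨s, hs, rfl⟩
    have h1 := (abs_le.1 (hC _ (hmem p hp s hs))).1
    have h2 : 0 ≤ k * |s| := by positivity
    simp only
    linarith
  have hmin : ∀ p ∈ Set.Ioo (A / k) (T - A / k) ×ˢ Ω, ∃ s ∈ Set.Icc (-(A / k)) (A / k),
      infConv u A k p = u (p.1 + s, p.2) + k * |s| := by
    intro p hp
    have hl : LowerSemicontinuousOn (fun s : ℝ => u (p.1 + s, p.2) + k * |s|)
        (Set.Icc (-(A / k)) (A / k)) := by
      intro s hs y hy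
      have h := hjoint p hp s hs y hy
      have hc : Continuous (fun s : ℝ => (p, s)) := by fun_prop
      exact ((hc.tendsto s).eventually h).filter_mono nhdsWithin_le_nhds
    obtain ⟨s, hs, hsm⟩ := hl.exists_isMinOn hKne isCompact_Icc
    refine ⟨s, hs, le_antisymm (csInf_le (hbelow p hp) ⟨s, hs, rfl⟩) ?_⟩
    refine le_csInf (hKne.image _) ?_
    rintro _ ⟨s', hs', rfl⟩
    exact hsm hs'
  refine ⟨?_, ?_⟩
  · intro p hp y hy
    have hev : ∀ᶠ x in 𝓝 p, ∀ s ∈ Set.Icc (-(A / k)) (A / k),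
        y < u (x.1 + s, x.2) + k * |s| := by
      refine isCompact_Icc.eventually_forall_of_forall_eventually ?_
      intro s hs
      exact hjoint p hp s hs y (lt_of_lt_of_le hy (csInf_le (hbelow p hp) ⟨s, hs, rfl⟩))
    filter_upwards [hev.filter_mono nhdsWithin_le_nhds, self_mem_nhdsWithin] with x hx hxD
    obtain ⟨s, hs, hse⟩ := hmin x hxD
    rw [hse]
    exact hx s hs
  · rintro ⟨t₀, z₀⟩ hp q ⟨hq1, hq2, hq3⟩
    obtain ⟨s, hs, hse⟩ := hmin _ hp
    have hm := hmem _ hp s hs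
    simp only at hm hse ⊢
    have hDo' : IsOpen (Set.Ioo (A / k) (T - A / k) ×ˢ Ω) := isOpen_Ioo.prod hΩo
    have hq2' := hq2.and (hDo'.mem_nhds hp)
    have hshift : Tendsto (fun x : ℝ × (Fin n → ℂ) => (x.1 - s, x.2)) (𝓝 (t₀ + s, z₀))
        (𝓝 (t₀, z₀)) := by
      have hc : Continuous (fun x : ℝ × (Fin n → ℂ) => (x.1 - s, x.2)) := by fun_prop
      have := hc.tendsto (t₀ + s, z₀)
      simpa using this
    have key := hvis (t₀ + s, z₀) hm (fun x => q (x.1 - s, x.2) - k * |s|) ⟨?_, ?_, ?_⟩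
    · simp only [add_sub_cancel_right] at key
      have hder : deriv (fun t => q (t - s, z₀) - k * |s|) (t₀ + s)
          = deriv (fun t => q (t, z₀)) t₀ := by
        rw [deriv_sub_const, deriv_comp_sub_const (fun t => q (t, z₀)) s (t₀ + s)]
        simp
      have hhess : complexHessian (fun z => q (t₀, z) - k * |s|) z₀
          = complexHessian (fun z => q (t₀, z)) z₀ := by
        have hC2 : ContDiffAt ℝ 2 (fun z => q (t₀, z)) z₀ := hq3.self_of_nhds.2
        have h2 : iteratedFDeriv ℝ 2 (fun z => q (t₀, z) - k * |s|) z₀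
            = iteratedFDeriv ℝ 2 (fun z => q (t₀, z)) z₀ := by
          have hf : fderiv ℝ (fun z => q (t₀, z) - k * |s|) = fderiv ℝ (fun z => q (t₀, z)) := by
            funext z
            exact fderiv_sub_const _
          ext m
          simp only [iteratedFDeriv_two_apply, hf]
        unfold complexHessian
        rw [h2]
      rw [hder, hhess] at key
      refine key.trans ?_
      rw [EReal.coe_le_coe_iff]
      refine mul_le_mul_of_nonneg_right ?_ (hg0 _ hp.2)
      rw [Real.exp_le_exp]
      refine add_le_add le_rfl ?_
      have h0 : 0 ≤ k * |s| := by positivity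
      refine (hGm (t₀ + s) z₀ (by linarith : q (t₀, z₀) - k * |s| ≤ q (t₀, z₀))).trans ?_
      refine le_csSup ?_ ⟨s, hs, rfl⟩
      refine (isCompact_Icc.image_of_continuousOn ?_).bddAbove
      refine hGc.comp (f := fun s : ℝ => (t₀ + s, z₀, q (t₀, z₀)))
        (Continuous.continuousOn (by fun_prop)) ?_
      intro s' hs'
      have h := hmem _ hp s' hs'
      exact ⟨⟨h.1.1.le, h.1.2.le⟩, subset_closure h.2, trivial⟩
    · simp only [add_sub_cancel_right]
      rw [hq1, hse]
      ring
    · filter_upwards [hshift.eventually hq2'] with x hx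
      have h1 : infConv u A k (x.1 - s, x.2) ≤ u (x.1 - s + s, x.2) + k * |s| :=
        csInf_le (hbelow _ hx.2) ⟨s, hs, rfl⟩
      rw [sub_add_cancel] at h1
      have h2 := hx.1
      have h3 : u (x.1, x.2) = u x := rfl
      linarith
    · filter_upwards [hshift.eventually hq3] with x hx
      refine ⟨?_, ?_⟩
      · have h1 : DifferentiableAt ℝ (fun t => q (t, x.2)) (x.1 - s) := hx.1
        have h2 : DifferentiableAt ℝ (fun t : ℝ => t - s) x.1 := by fun_prop
        exact (DifferentiableAt.comp x.1 h1 h2).sub_const _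
      · exact ContDiffAt.sub hx.2 contDiffAt_const
end

section
/- Let u be a viscosity subsolution of F(Hw) = e^{∂_t w + G(t,z,w)} g(z) in Ω_T. Then for every t₀ ∈ (0,T), the function z ↦ u(t₀,z) satisfies F(H u(t₀,·)) ≥ 0 in the viscosity sense in Ω, i.e., for every z₀ ∈ Ω and every upper test function q for u(t₀,·) at z₀, the eigenvalue vector λ(Hq(z₀)) lies in cl(Γ); equivalently, u(t₀,·) is Γ-subharmonic in Ω. -/
open Filter Topology Set

lemma exists_perm_of_map_eq {n : ℕ} {a b : Fin n → ℝ}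
    (h : Multiset.map a Finset.univ.val = Multiset.map b Finset.univ.val) :
    ∃ σ : Equiv.Perm (Fin n), a = b ∘ σ := by
  have hl : (List.ofFn a).Perm (List.ofFn b) := by
    rw [← Multiset.coe_eq_coe]
    simpa [Fin.univ_val_map] using h
  have key : a ∘ Tuple.sort a = b ∘ Tuple.sort b := by
    apply List.ofFn_injective
    exact (((Tuple.sort a).ofFn_comp_perm a).trans
      (hl.trans ((Tuple.sort b).ofFn_comp_perm b).symm)).eq_of_pairwise'
        (Tuple.monotone_sort a).sortedLE_ofFn.pairwise
        (Tuple.monotone_sort b).sortedLE_ofFn.pairwise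
  refine ⟨(Tuple.sort a).symm.trans (Tuple.sort b), ?_⟩
  ext i
  have := congrFun key ((Tuple.sort a).symm i)
  simpa using this


/-- Hermitian matrices whose eigenvalue vector lies in `cl(Γ)`. -/
def HermSet (n : ℕ) (Γ : Set (Fin n → ℝ)) : Set (Matrix (Fin n) (Fin n) ℂ) :=
  {A | ∃ h : A.IsHermitian, h.eigenvalues ∈ closure Γ}

lemma isCompact_unitary_aux (n : ℕ) :
    IsCompact {U : Matrix (Fin n) (Fin n) ℂ | star U * U = 1 ∧ U * star U = 1} := by
  have hK : IsCompact (Set.pi Set.univ (fun _ : Fin n => Set.pi Set.univ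
      (fun _ : Fin n => Metric.closedBall (0 : ℂ) 1)) : Set (Fin n → Fin n → ℂ)) :=
    isCompact_univ_pi fun _ => isCompact_univ_pi fun _ => isCompact_closedBall _ _
  refine IsCompact.of_isClosed_subset (X := Matrix (Fin n) (Fin n) ℂ) hK ?_ ?_
  · apply IsClosed.and
    · exact isClosed_eq (by fun_prop) (by fun_prop)
    · exact isClosed_eq (by fun_prop) (by fun_prop)
  · intro U hU i _ j _
    have : U ∈ Matrix.unitaryGroup (Fin n) ℂ := by
      rw [Matrix.mem_unitaryGroup_iff]; exact hU.2
    simpa using entry_norm_bound_of_unitary this i j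

lemma closure_perm {n : ℕ} {Γ : Set (Fin n → ℝ)}
    (hs : ∀ σ : Equiv.Perm (Fin n), ∀ x ∈ Γ, x ∘ σ ∈ Γ) (σ : Equiv.Perm (Fin n))
    {x : Fin n → ℝ} (hx : x ∈ closure Γ) : x ∘ σ ∈ closure Γ := by
  have hc : Continuous (fun x : Fin n → ℝ => x ∘ σ) := by
    apply continuous_pi; intro i; exact continuous_apply _
  exact map_mem_closure (f := fun x : Fin n → ℝ => x ∘ σ) hc hx (fun y hy => hs σ y hy)

lemma mem_hermSet_iff {n : ℕ} {Γ : Set (Fin n → ℝ)}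
    (hs : ∀ σ : Equiv.Perm (Fin n), ∀ x ∈ Γ, x ∘ σ ∈ Γ) (A : Matrix (Fin n) (Fin n) ℂ) :
    A ∈ HermSet n Γ ↔ ∃ U : Matrix (Fin n) (Fin n) ℂ, (star U * U = 1 ∧ U * star U = 1) ∧
      star U * A * U = Matrix.diagonal (fun i => (((star U * A * U) i i).re : ℂ)) ∧
      (fun i => ((star U * A * U) i i).re) ∈ closure Γ := by
  constructor
  · rintro ⟨h, he⟩
    have h1 := h.conjStarAlgAut_star_eigenvectorUnitary
    rw [Unitary.conjStarAlgAut_apply] at h1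
    simp only [Unitary.coe_star, star_star] at h1
    refine ⟨h.eigenvectorUnitary, ⟨Unitary.coe_star_mul_self _, Unitary.coe_mul_star_self _⟩, ?_⟩
    rw [h1]
    constructor
    · ext i j; simp [Matrix.diagonal]
    · simpa using he
  · rintro ⟨U, ⟨hU1, hU2⟩, hd, hc⟩
    set d : Fin n → ℝ := fun i => ((star U * A * U) i i).re with hdd
    have hA : A = U * Matrix.diagonal (fun i => (d i : ℂ)) * star U := by
      rw [← hd]
      calc A = (U * star U) * A * (U * star U) := by simp [hU2]
        _ = _ := by simp only [mul_assoc]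
    have hH : A.IsHermitian := by
      rw [hA]
      unfold Matrix.IsHermitian
      simp only [Matrix.star_eq_conjTranspose, Matrix.conjTranspose_mul,
        Matrix.conjTranspose_conjTranspose, Matrix.diagonal_conjTranspose, mul_assoc]
      congr 3
      ext i; simp
    have hcp : A.charpoly = ∏ i, (Polynomial.X - Polynomial.C (d i : ℂ)) := by
      rw [hA, Matrix.charpoly_mul_comm, ← mul_assoc, hU1, one_mul, Matrix.charpoly_diagonal]
    have hr : A.charpoly.roots = Multiset.map (fun i => (d i : ℂ)) Finset.univ.val := by
      rw [hcp, Polynomial.roots_prod]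
      · simp
      · exact Finset.prod_ne_zero_iff.mpr fun i _ => Polynomial.X_sub_C_ne_zero _
    rw [hH.roots_charpoly_eq_eigenvalues] at hr
    have hr2 := congrArg (Multiset.map Complex.re) hr
    simp only [Multiset.map_map] at hr2
    have hr3 : Multiset.map hH.eigenvalues Finset.univ.val = Multiset.map d Finset.univ.val := by
      simpa [Function.comp_def] using hr2
    obtain ⟨σ, hσ⟩ := exists_perm_of_map_eq hr3
    refine ⟨hH, ?_⟩
    rw [hσ]
    exact closure_perm hs σ hc

lemma isClosed_hermSet {n : ℕ} {Γ : Set (Fin n → ℝ)}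
    (hs : ∀ σ : Equiv.Perm (Fin n), ∀ x ∈ Γ, x ∘ σ ∈ Γ) : IsClosed (HermSet n Γ) := by
  let K := {U : Matrix (Fin n) (Fin n) ℂ | star U * U = 1 ∧ U * star U = 1}
  have : CompactSpace K := isCompact_iff_compactSpace.1 (isCompact_unitary_aux n)
  have hcl : IsClosed {p : Matrix (Fin n) (Fin n) ℂ × K |
      star (p.2 : Matrix (Fin n) (Fin n) ℂ) * p.1 * p.2 =
        Matrix.diagonal (fun i => (((star (p.2 : Matrix (Fin n) (Fin n) ℂ) * p.1 * p.2) i i).re : ℂ)) ∧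
      (fun i => ((star (p.2 : Matrix (Fin n) (Fin n) ℂ) * p.1 * p.2) i i).re) ∈ closure Γ} := by
    have hm : Continuous (fun p : Matrix (Fin n) (Fin n) ℂ × K =>
      star (p.2 : Matrix (Fin n) (Fin n) ℂ) * p.1 * p.2) := by fun_prop
    have hd : ∀ i, Continuous (fun p : Matrix (Fin n) (Fin n) ℂ × K =>
      ((star (p.2 : Matrix (Fin n) (Fin n) ℂ) * p.1 * p.2) i i).re) := fun i =>
        Complex.continuous_re.comp (hm.matrix_elem i i)
    apply IsClosed.and
    · refine isClosed_eq hm (Continuous.matrix_diagonal ?_)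
      exact continuous_pi fun i => Complex.continuous_ofReal.comp (hd i)
    · exact isClosed_closure.preimage (continuous_pi hd)
  have := isClosedMap_fst_of_compactSpace _ hcl
  convert this using 1
  ext A
  rw [mem_hermSet_iff hs]
  constructor
  · rintro ⟨U, hU, h⟩
    exact ⟨(A, ⟨U, hU⟩), h, rfl⟩
  · rintro ⟨⟨A', U⟩, h, rfl⟩
    exact ⟨U, U.2, h⟩

lemma mem_hermSet_of_le_Fop {n : ℕ} {f : (Fin n → ℝ) → ℝ} {Γ : Set (Fin n → ℝ)}
    {A : Matrix (Fin n) (Fin n) ℂ} {r : ℝ} (h : (r : EReal) ≤ Fop f Γ A) : A ∈ HermSet n Γ := by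
  unfold Fop at h
  split_ifs at h with h1 h2
  · exact ⟨h1, h2⟩
  · simp at h
  · simp at h

lemma complexHessian_add {n : ℕ} {p q : (Fin n → ℂ) → ℝ} {z : Fin n → ℂ} (c : ℝ)
    (hp : ContDiffAt ℝ 2 p z) (hq : ContDiffAt ℝ 2 q z) :
    complexHessian (fun z => p z + c * q z) z = complexHessian p z + c • complexHessian q z := by
  have h : iteratedFDeriv ℝ 2 (fun z => p z + c * q z) z
      = iteratedFDeriv ℝ 2 p z + c • iteratedFDeriv ℝ 2 q z := by
    have h1 : ContDiffAt ℝ 2 (c • q) z := contDiffAt_const.smul hq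
    have := iteratedFDeriv_add_apply (i := 2) (f := p) (g := c • q) hp h1
    rw [iteratedFDeriv_const_smul_apply (i := 2) hq] at this
    exact this
  ext j k
  simp only [complexHessian, h, Matrix.add_apply, Matrix.smul_apply,
    ContinuousMultilinearMap.add_apply, ContinuousMultilinearMap.smul_apply, smul_eq_mul,
    Complex.real_smul]
  push_cast
  ring

lemma complexHessian_add_const {n : ℕ} {p : (Fin n → ℂ) → ℝ} {z : Fin n → ℂ} (c : ℝ)
    (hp : ContDiffAt ℝ 2 p z) :
    complexHessian (fun z => p z + c) z = complexHessian p z := by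
  have h := complexHessian_add (q := fun _ => 1) c hp contDiffAt_const
  have h0 : complexHessian (fun _ : Fin n → ℂ => (1 : ℝ)) z = 0 := by
    ext j k
    simp [complexHessian, iteratedFDeriv_const_of_ne]
  simpa [h0] using h

lemma continuousAt_complexHessian {n : ℕ} {p : (Fin n → ℂ) → ℝ} {z : Fin n → ℂ}
    (hp : ContDiffAt ℝ 2 p z) : ContinuousAt (complexHessian p) z := by
  have h := hp.continuousAt_iteratedFDeriv (k := 2) le_rfl
  have he : ∀ v, ContinuousAt (fun z => iteratedFDeriv ℝ 2 p z v) z := fun v =>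
    (ContinuousMultilinearMap.apply ℝ (fun _ : Fin 2 => Fin n → ℂ) ℝ v).continuous.continuousAt.comp h
  refine continuousAt_pi.2 fun j => continuousAt_pi.2 fun k => ?_
  unfold complexHessian
  have h1 := he ![Pi.single j 1, Pi.single k 1]
  have h2 := he ![Pi.single j Complex.I, Pi.single k Complex.I]
  have h3 := he ![Pi.single j 1, Pi.single k Complex.I]
  have h4 := he ![Pi.single j Complex.I, Pi.single k 1]
  exact (Complex.continuous_ofReal.continuousAt.comp ((h1.add h2).div_const 4)).add
    (continuousAt_const.mul
      (Complex.continuous_ofReal.continuousAt.comp ((h3.sub h4).div_const 4)))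

/-- Strict upper test functions. -/
lemma strict_case {n : ℕ} {Γ : Set (Fin n → ℝ)} {f : (Fin n → ℝ) → ℝ}
    {G : ℝ → (Fin n → ℂ) → ℝ → ℝ} {g : (Fin n → ℂ) → ℝ} {D : Set (ℝ × (Fin n → ℂ))}
    (hD : IsOpen D) {u : ℝ × (Fin n → ℂ) → ℝ} (hsub : ParSubsolOn f Γ G g D u)
    (hcl : IsClosed (HermSet n Γ))
    {t₀ : ℝ} {z₀ : Fin n → ℂ} (hp : (t₀, z₀) ∈ D) {q : (Fin n → ℂ) → ℝ}
    (hq : ContDiffAt ℝ 2 q z₀) (hq0 : q z₀ = u (t₀, z₀))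
    (hlt : ∀ᶠ z in 𝓝 z₀, z ≠ z₀ → u (t₀, z) < q z) : complexHessian q z₀ ∈ HermSet n Γ := by
  have hfreq : ∃ᶠ z in 𝓝 z₀, complexHessian q z ∈ HermSet n Γ := by
    rw [Filter.frequently_iff]
    intro V hV
    have hC : ∀ᶠ z in 𝓝 z₀, ContDiffAt ℝ 2 q z := hq.eventually (by simp)
    have hall : ∀ᶠ p in 𝓝 (t₀, z₀), p ∈ D ∧ p.2 ∈ V ∧ ContDiffAt ℝ 2 q p.2 ∧
        (p.2 ≠ z₀ → u (t₀, p.2) < q p.2) := by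
      have hs : Tendsto Prod.snd (𝓝 (t₀, z₀)) (𝓝 z₀) := continuous_snd.tendsto _
      filter_upwards [hD.mem_nhds hp, hs.eventually hV, hs.eventually hC, hs.eventually hlt]
        with p h1 h2 h3 h4 using ⟨h1, h2, h3, h4⟩
    obtain ⟨r, hr, hball⟩ := Metric.nhds_basis_closedBall.eventually_iff.1 hall
    let w : ℝ → ℝ × (Fin n → ℂ) → ℝ := fun k p => u p + -(q p.2 + k * (p.1 - t₀) ^ 2)
    have husc : ∀ k, UpperSemicontinuousOn (w k) (Metric.closedBall (t₀, z₀) r) := by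
      intro k
      refine UpperSemicontinuousOn.add (hsub.1.mono fun p hp => (hball hp).1) ?_
      apply ContinuousOn.upperSemicontinuousOn
      apply ContinuousOn.neg
      apply ContinuousOn.add
      · intro p hp
        exact ((hball hp).2.2.1.continuousAt.comp continuous_snd.continuousAt).continuousWithinAt
      · fun_prop
    have hk : ∃ k : ℝ, 0 ≤ k ∧ ∀ p ∈ Metric.sphere (t₀, z₀) r, w k p < 0 := by
      refine IsCompact.induction_on (p := fun s => ∃ k : ℝ, 0 ≤ k ∧ ∀ p ∈ s, w k p < 0)
        (isCompact_sphere (t₀, z₀) r) ⟨0, le_rfl, by simp⟩ ?_ ?_ ?_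
      · rintro s t hst ⟨k, hk, h⟩
        exact ⟨k, hk, fun p hp => h p (hst hp)⟩
      · rintro s t ⟨k, hk, h⟩ ⟨l, hl, h'⟩
        refine ⟨k + l, by positivity, fun p hp => ?_⟩
        rcases hp with hp | hp
        · have := h p hp
          simp only [w] at this ⊢
          nlinarith [mul_nonneg hl (sq_nonneg (p.1 - t₀))]
        · have := h' p hp
          simp only [w] at this ⊢
          nlinarith [mul_nonneg hk (sq_nonneg (p.1 - t₀))]
      · intro p hp
        have hpt : ∃ k : ℝ, 0 ≤ k ∧ w k p < 0 := by
          by_cases ht : p.1 = t₀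
          · refine ⟨0, le_rfl, ?_⟩
            have hz : p.2 ≠ z₀ := by
              intro hz
              have : p = (t₀, z₀) := Prod.ext ht hz
              rw [this] at hp
              simp at hp
              exact hr.ne hp
            have h := (hball (Metric.sphere_subset_closedBall hp)).2.2.2 hz
            have hpp : (t₀, p.2) = p := Prod.ext ht.symm rfl
            rw [hpp] at h
            simp only [w]; linarith
          · have hpos : 0 < (p.1 - t₀) ^ 2 := by
              have := sub_ne_zero.2 ht
              positivity
            refine ⟨(|u p - q p.2| + 1) / (p.1 - t₀) ^ 2, by positivity, ?_⟩
            simp only [w]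
            rw [div_mul_cancel₀ _ hpos.ne']
            linarith [le_abs_self (u p - q p.2)]
        obtain ⟨k, hk, hw⟩ := hpt
        have := (husc k).mono Metric.sphere_subset_closedBall p hp 0 hw
        exact ⟨_, this, k, hk, fun p hp => hp⟩
    obtain ⟨k, hk0, hk⟩ := hk
    obtain ⟨p, hpB, hpmax⟩ := (husc k).exists_isMaxOn
      ⟨(t₀, z₀), Metric.mem_closedBall_self hr.le⟩ (isCompact_closedBall _ _)
    have hw0 : 0 ≤ w k p := by
      have := hpmax (Metric.mem_closedBall_self (x := (t₀, z₀)) hr.le)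
      simpa [w, hq0] using this
    have hpb : p ∈ Metric.ball (t₀, z₀) r := by
      rcases lt_or_eq_of_le (Metric.mem_closedBall.1 hpB) with h | h
      · exact h
      · exact absurd (hk p h) (not_lt.2 hw0)
    obtain ⟨hpD, hpV, hpC, -⟩ := hball hpB
    refine ⟨p.2, hpV, ?_⟩
    let Q : ℝ × (Fin n → ℂ) → ℝ := fun x => q x.2 + (k * (x.1 - t₀) ^ 2 + w k p)
    have htest : IsUpperTestAt u Q p := by
      refine ⟨by simp only [Q, w]; ring, ?_, ?_⟩
      · filter_upwards [Metric.isOpen_ball.mem_nhds hpb] with x hx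
        have := hpmax (Metric.ball_subset_closedBall hx)
        simp only [Set.mem_setOf_eq] at this
        simp only [Q]
        have e : w k x = u x + -(q x.2 + k * (x.1 - t₀) ^ 2) := rfl
        linarith
      · filter_upwards [Metric.isOpen_ball.mem_nhds hpb] with x hx
        refine ⟨by simp only [Q]; fun_prop, ?_⟩
        exact (hball (Metric.ball_subset_closedBall hx)).2.2.1.add
          (contDiffAt_const (c := k * (x.1 - t₀) ^ 2 + w k p))
    have := mem_hermSet_of_le_Fop (hsub.2 p hpD Q htest)
    rw [← complexHessian_add_const (k * (p.1 - t₀) ^ 2 + w k p) hpC]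
    exact this
  by_contra hn
  exact hfreq ((continuousAt_complexHessian hq).eventually (hcl.isOpen_compl.mem_nhds hn))

/-- time slices of a subsolution are Γ-subharmonic. -/
theorem stmt13
    {n : ℕ} (hn : 1 ≤ n) (Γ : Set (Fin n → ℝ)) (f : (Fin n → ℝ) → ℝ)
    (hΓ : IsGammaCone n Γ) (hf : IsHessianDensity n Γ f)
    (Ω : Set (Fin n → ℂ)) (hΩo : IsOpen Ω) (hΩb : Bornology.IsBounded Ω)
    (hΩc : IsConnected Ω) (T : ℝ) (hT : 0 < T)
    (G : ℝ → (Fin n → ℂ) → ℝ → ℝ)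
    (hGc : ContinuousOn (fun p : ℝ × (Fin n → ℂ) × ℝ => G p.1 p.2.1 p.2.2)
      (Set.Icc 0 T ×ˢ closure Ω ×ˢ Set.univ))
    (hGm : ∀ t z, Monotone (fun r => G t z r))
    (g : (Fin n → ℂ) → ℝ) (hgc : ContinuousOn g Ω)
    (hg0 : ∀ z ∈ Ω, 0 ≤ g z) (hgb : ∃ C, ∀ z ∈ Ω, g z ≤ C)
    (u : ℝ × (Fin n → ℂ) → ℝ)
    (hsub : ParSubsolOn f Γ G g (Set.Ioo 0 T ×ˢ Ω) u) :
    ∀ t₀ ∈ Set.Ioo (0 : ℝ) T, GammaSubharmonicOn Γ Ω (fun z => u (t₀, z)) := by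
  intro t₀ ht₀ z₀ hz₀ q hq
  have hcl : IsClosed (HermSet n Γ) := isClosed_hermSet hΓ.2.2.2.1
  obtain ⟨hq0, hqle, hqC⟩ := hq
  let N : (Fin n → ℂ) → ℝ := fun z => ∑ i, ‖z i - z₀ i‖ ^ 2
  have hN : ContDiff ℝ 2 N := by
    refine ContDiff.sum fun i _ => ContDiff.norm_sq ℝ ?_
    exact (contDiff_apply ℝ ℂ i).sub contDiff_const
  have hNpos : ∀ z, z ≠ z₀ → 0 < N z := by
    intro z hz
    obtain ⟨i, hi⟩ := Function.ne_iff.1 hz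
    refine Finset.sum_pos' (fun _ _ => by positivity) ⟨i, Finset.mem_univ _, ?_⟩
    have := sub_ne_zero.2 hi
    positivity
  have hmem : ∀ ε : ℝ, 0 < ε →
      complexHessian q z₀ + ε • complexHessian N z₀ ∈ HermSet n Γ := by
    intro ε hε
    rw [← complexHessian_add ε hqC hN.contDiffAt]
    refine strict_case (isOpen_Ioo.prod hΩo) hsub hcl (t₀ := t₀) ⟨ht₀, hz₀⟩
      (hqC.add (contDiffAt_const.mul hN.contDiffAt)) ?_ ?_
    · simp [N, hq0]
    · filter_upwards [hqle] with z hz hne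
      have := mul_pos hε (hNpos z hne)
      linarith
  have hlim : Tendsto (fun ε : ℝ => complexHessian q z₀ + ε • complexHessian N z₀)
      (𝓝[>] 0) (𝓝 (complexHessian q z₀)) := by
    have hc : Continuous (fun ε : ℝ => complexHessian q z₀ + ε • complexHessian N z₀) := by
      fun_prop
    have := hc.tendsto 0
    simp only [zero_smul, add_zero] at this
    exact this.mono_left nhdsWithin_le_nhds
  exact hcl.mem_of_tendsto hlim (by
    filter_upwards [self_mem_nhdsWithin] with ε hε using hmem ε hε)
end
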